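/- Let φ be a satisfiable 3-SAT instance, a a truth assignment satisfying φ, h > 1 an integer, G = reduction(φ,h), and T = tree_7-spanner(G,φ,a). Then for every building block G^{i,j} of G and every clause c of φ, the T-distance between any two of the vertices q_{1,c}^{i,j},…,q_{8,c}^{i,j} is at most 4. -/

import Mathlib

/-!
Let `z` be the variable of `c` chosen by `chosenIdx`, so that its literal in `c` is true under
`a`.  The rows of `M` belonging to `z` and `z_c` are complementary, hence each of
the eight vertices `q_{l,c}` is joined in `T` to one of `z`, `z_c`.  Since the literal of `z` in
`c` is true, the value `a z` equals the polarity of `z` in `c`, so `z` and `z_c` are joined in `T`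
to the same one of `v_⊕`, `v_⊖`.  Every `q_{l,c}` is therefore at distance at most two
from this common vertex (`exists_hub`), and two such vertices are at distance at most four.
-/

open SimpleGraph

/-- A 3-SAT clause on Boolean variables indexed by naturals: variables `v1,v2,v3`
with polarities `p1,p2,p3` (`true` = the variable appears positively). -/
structure Clause3 where
  v1 : ℕ
  v2 : ℕ
  v3 : ℕ
  p1 : Bool
  p2 : Bool
  p3 : Bool
deriving DecidableEq

/-- A 3-SAT instance: a nonempty finite set of clauses, each on 3 distinct variables. -/
structure SAT3 where
  clauses : Finset Clause3
  nonempty : clauses.Nonempty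
  distinct : ∀ c ∈ clauses, c.v1 ≠ c.v2 ∧ c.v1 ≠ c.v3 ∧ c.v2 ≠ c.v3

/-- The variables of a 3-SAT instance. -/
def SAT3.vars (φ : SAT3) : Finset ℕ :=
  φ.clauses.biUnion (fun c => {c.v1, c.v2, c.v3})

/-- A truth assignment satisfies a clause if some literal is made true. -/
def Clause3.satisfiedBy (c : Clause3) (a : ℕ → Bool) : Prop :=
  a c.v1 = c.p1 ∨ a c.v2 = c.p2 ∨ a c.v3 = c.p3

/-- A truth assignment satisfies an instance if it satisfies every clause. -/
def SAT3.satisfiedBy (φ : SAT3) (a : ℕ → Bool) : Prop :=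
  ∀ c ∈ φ.clauses, c.satisfiedBy a

/-- `x` is one of the three variables of clause `c`. -/
def Clause3.hasVar (c : Clause3) (x : ℕ) : Prop :=
  x = c.v1 ∨ x = c.v2 ∨ x = c.v3

/-- The 6 × 8 matrix `M` of the construction. -/
def Mmat : Fin 6 → Fin 8 → Bool :=
  ![![true, true, true, true, false, false, false, false],
    ![false, false, false, false, true, true, true, true],
    ![true, true, false, false, true, true, false, false],
    ![false, false, true, true, false, false, true, true],
    ![true, false, true, false, true, false, true, false],
    ![false, true, false, true, false, true, false, true]]

/-- The address of a building block: the (clause, index `r`) choices along the chain of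
attachments leading from the root block `G^{1,1}` (address `[]`) to this block; the head of
the list is the most recent attachment.  A block of address `b` lies in layer `b.length + 1`. -/
abbrev BlockAddr : Type := List (Clause3 × Fin 7)

/-- The ambient vertices of the reduction graph: the five vertices `q1, p1, v, p2, q2` of the
initial path, and for each building block address `b`: the variable vertices `x^b`, the
clause-occurrence vertices `x_c^b`, and the vertices `q_{r,c}^b`.  The vertices
`v_⊕^b, v_⊖^b` of a block are identified with vertices of its parent (see `vplus`, `vminus`). -/
inductive RVert where
  | qp : RVert
  | pp : RVert
  | vv : RVert
  | pm : RVert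
  | qm : RVert
  | var : BlockAddr → ℕ → RVert
  | varC : BlockAddr → Clause3 → ℕ → RVert
  | q : BlockAddr → Clause3 → Fin 8 → RVert

/-- The vertex `v_⊕` of the block with address `b` (an identified vertex of the parent). -/
def vplus : BlockAddr → RVert
  | [] => RVert.qp
  | (c, r) :: b => RVert.q b c r.castSucc

/-- The vertex `v_⊖` of the block with address `b` (an identified vertex of the parent). -/
def vminus : BlockAddr → RVert
  | [] => RVert.qm
  | (c, r) :: b => RVert.q b c r.succ

/-- The group of six vertices `g = (y^b, y_c^b, z^b, z_c^b, w^b, w_c^b)` for clause `c`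
with variables `y,z,w` in block `b`. -/
def gvec (b : BlockAddr) (c : Clause3) : Fin 6 → RVert :=
  ![RVert.var b c.v1, RVert.varC b c c.v1,
    RVert.var b c.v2, RVert.varC b c c.v2,
    RVert.var b c.v3, RVert.varC b c c.v3]

/-- The block with address `b` is present in `reduction(φ, h)`. -/
def validBlock (φ : SAT3) (h : ℕ) (b : BlockAddr) : Prop :=
  b.length + 1 ≤ h ∧ ∀ p ∈ b, p.1 ∈ φ.clauses

/-- The vertices of `reduction(φ, h)` among the ambient vertices. -/
def validVert (φ : SAT3) (h : ℕ) : RVert → Prop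
  | RVert.qp => True
  | RVert.pp => True
  | RVert.vv => True
  | RVert.pm => True
  | RVert.qm => True
  | RVert.var b x => validBlock φ h b ∧ x ∈ φ.vars
  | RVert.varC b c x => validBlock φ h b ∧ c ∈ φ.clauses ∧ c.hasVar x
  | RVert.q b c _ => validBlock φ h b ∧ c ∈ φ.clauses

/-- The edges of the reduction graph (to be symmetrized): the 4 path edges; the edges
`x^b v_⊕^b`, `x^b v_⊖^b`; the edges between the group of six and the `q` vertices given by
the matrix `M`; and the polarity edges, joining `x_c^b` to `v_⊕^b` when `x` occurs
positively in `c` and to `v_⊖^b` otherwise. -/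
def baseAdj (u w : RVert) : Prop :=
  (u = RVert.qp ∧ w = RVert.pp) ∨
  (u = RVert.pp ∧ w = RVert.vv) ∨
  (u = RVert.vv ∧ w = RVert.pm) ∨
  (u = RVert.pm ∧ w = RVert.qm) ∨
  (∃ b x, u = RVert.var b x ∧ (w = vplus b ∨ w = vminus b)) ∨
  (∃ b c k l, Mmat k l = true ∧ u = gvec b c k ∧ w = RVert.q b c l) ∨
  (∃ (b : BlockAddr) (c : Clause3),
    (u = RVert.varC b c c.v1 ∧ w = (if c.p1 then vplus b else vminus b)) ∨
    (u = RVert.varC b c c.v2 ∧ w = (if c.p2 then vplus b else vminus b)) ∨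
    (u = RVert.varC b c c.v3 ∧ w = (if c.p3 then vplus b else vminus b)))

/-- The vertex type of the graph `reduction(φ, h)`. -/
abbrev RedVert (φ : SAT3) (h : ℕ) : Type := {x : RVert // validVert φ h x}

/-- The graph `G = reduction(φ, h)` of the construction. -/
def reductionGraph (φ : SAT3) (h : ℕ) : SimpleGraph (RedVert φ h) :=
  SimpleGraph.comap Subtype.val (SimpleGraph.fromRel baseAdj)

/-- The central vertex `v` of the initial path of `reduction(φ, h)`. -/
def centralVert (φ : SAT3) (h : ℕ) : RedVert φ h := ⟨RVert.vv, trivial⟩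

/-- `T` is a tree `t`-spanner of `G`: a spanning tree of `G` all whose distances are within a
factor `t` of those of `G`. -/
def IsTreeSpanner {V : Type*} (G T : SimpleGraph V) (t : ℕ) : Prop :=
  T ≤ G ∧ T.IsTree ∧ ∀ u w : V, T.dist u w ≤ t * G.dist u w

/-- A spanning tree `T` of `G` is `v`-concentrated if for every `i ≥ 0` the subgraph of `T`
induced by the ball `N_G^i[v]` is connected. -/
def IsConcentrated {V : Type*} (G T : SimpleGraph V) (v : V) : Prop :=
  ∀ i : ℕ, (T.induce {x : V | G.dist v x ≤ i}).Connected

/-- The index (0, 1 or 2) of a variable of clause `c` whose literal in `c` is made true by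
the assignment `a` (when `a` satisfies `c`). -/
def chosenIdx (a : ℕ → Bool) (c : Clause3) : Fin 3 :=
  if a c.v1 = c.p1 then 0 else if a c.v2 = c.p2 then 1 else 2

/-- The edges (to be symmetrized) of the spanning tree built by algorithm
`tree_7-spanner(G, φ, a)`: the 4 path edges; for each block `b` and variable `x` the edge
from `x^b` to `v_⊕^b` if `a x = true` and to `v_⊖^b` otherwise; for each clause `c` and
variable `x` of `c` the unique polarity edge joining `x_c^b` to one of `v_⊕^b, v_⊖^b`; and,
for the chosen variable `z` of `c` made true by `a`, all the `M`-edges between the eight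
`q` vertices of `c` and the two vertices `z^b, z_c^b` (the rows `2·chosenIdx` and
`2·chosenIdx + 1` of `M`). -/
def spannerRel (a : ℕ → Bool) (u w : RVert) : Prop :=
  (u = RVert.qp ∧ w = RVert.pp) ∨
  (u = RVert.pp ∧ w = RVert.vv) ∨
  (u = RVert.vv ∧ w = RVert.pm) ∨
  (u = RVert.pm ∧ w = RVert.qm) ∨
  (∃ b x, u = RVert.var b x ∧ w = (if a x then vplus b else vminus b)) ∨
  (∃ (b : BlockAddr) (c : Clause3),
    (u = RVert.varC b c c.v1 ∧ w = (if c.p1 then vplus b else vminus b)) ∨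
    (u = RVert.varC b c c.v2 ∧ w = (if c.p2 then vplus b else vminus b)) ∨
    (u = RVert.varC b c c.v3 ∧ w = (if c.p3 then vplus b else vminus b))) ∨
  (∃ (b : BlockAddr) (c : Clause3) (k : Fin 6) (l : Fin 8),
    (k.val = 2 * (chosenIdx a c).val ∨ k.val = 2 * (chosenIdx a c).val + 1) ∧
    Mmat k l = true ∧ u = gvec b c k ∧ w = RVert.q b c l)

/-- The spanning subgraph `T = tree_7-spanner(reduction(φ,h), φ, a)` of `reduction(φ, h)`. -/
def spannerTree (φ : SAT3) (h : ℕ) (a : ℕ → Bool) : SimpleGraph (RedVert φ h) :=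
  SimpleGraph.comap Subtype.val (SimpleGraph.fromRel (spannerRel a))

lemma validVert_vplus {φ : SAT3} {h : ℕ} {b : BlockAddr} (hb : validBlock φ h b) :
    validVert φ h (vplus b) := by
  match b, hb with
  | [], _ => trivial
  | (c, r) :: b, ⟨h1, h2⟩ =>
    simp only [List.length_cons] at h1
    exact ⟨⟨by omega, fun p hp => h2 p (List.mem_cons_of_mem _ hp)⟩, h2 (c, r) List.mem_cons_self⟩

lemma validVert_vminus {φ : SAT3} {h : ℕ} {b : BlockAddr} (hb : validBlock φ h b) :
    validVert φ h (vminus b) := by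
  match b, hb with
  | [], _ => trivial
  | (c, r) :: b, ⟨h1, h2⟩ =>
    simp only [List.length_cons] at h1
    exact ⟨⟨by omega, fun p hp => h2 p (List.mem_cons_of_mem _ hp)⟩, h2 (c, r) List.mem_cons_self⟩

/-- The vertex `v_⊕` of block `b` if `p` is true, and `v_⊖` otherwise. -/
def anchor (b : BlockAddr) (p : Bool) : RVert := if p then vplus b else vminus b

lemma validVert_anchor {φ : SAT3} {h : ℕ} {b : BlockAddr} (hb : validBlock φ h b) (p : Bool) :
    validVert φ h (anchor b p) := by
  cases p
  · exact validVert_vminus hb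
  · exact validVert_vplus hb

lemma var_ne_anchor (b b' : BlockAddr) (x : ℕ) (p : Bool) : RVert.var b' x ≠ anchor b p := by
  cases p <;> cases b <;> simp [anchor, vplus, vminus]

lemma varC_ne_anchor (b b' : BlockAddr) (c : Clause3) (x : ℕ) (p : Bool) :
    RVert.varC b' c x ≠ anchor b p := by
  cases p <;> cases b <;> simp [anchor, vplus, vminus]

/-- The two rows of `M` belonging to one variable cover all eight columns. -/
lemma Mmat_cover (i : Fin 3) (l : Fin 8) :
    Mmat ⟨2 * i.val, by omega⟩ l = true ∨ Mmat ⟨2 * i.val + 1, by omega⟩ l = true := by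
  revert i l
  decide

/-- A chosen variable `x` of `c`, together with its polarity `a x` in `c`: it sits at the rows
`2 * chosenIdx` and `2 * chosenIdx + 1` of `gvec`, and `x_c` is joined in the tree to the
vertex `anchor b (a x)`, as is `x` itself. -/
lemma exists_chosen {a : ℕ → Bool} {c : Clause3} (hs : c.satisfiedBy a) (b : BlockAddr) :
    ∃ x, c.hasVar x ∧
      gvec b c ⟨2 * (chosenIdx a c).val, by omega⟩ = RVert.var b x ∧
      gvec b c ⟨2 * (chosenIdx a c).val + 1, by omega⟩ = RVert.varC b c x ∧
      spannerRel a (RVert.varC b c x) (anchor b (a x)) := by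
  by_cases h1 : a c.v1 = c.p1
  · have hi : chosenIdx a c = 0 := by simp [chosenIdx, h1]
    refine ⟨c.v1, Or.inl rfl, ?_, ?_, ?_⟩
    · simp [hi, gvec]
    · simp [hi, gvec]
    · exact .inr <| .inr <| .inr <| .inr <| .inr <| .inl ⟨b, c, .inl ⟨rfl, by rw [h1]; rfl⟩⟩
  by_cases h2 : a c.v2 = c.p2
  · have hi : chosenIdx a c = 1 := by simp [chosenIdx, h1, h2]
    refine ⟨c.v2, Or.inr (Or.inl rfl), ?_, ?_, ?_⟩
    · simp [hi, gvec]
    · simp [hi, gvec]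
    · exact .inr <| .inr <| .inr <| .inr <| .inr <| .inl
        ⟨b, c, .inr (.inl ⟨rfl, by rw [h2]; rfl⟩)⟩
  · have h3 : a c.v3 = c.p3 := (hs.resolve_left h1).resolve_left h2
    have hi : chosenIdx a c = 2 := by simp [chosenIdx, h1, h2]
    refine ⟨c.v3, Or.inr (Or.inr rfl), ?_, ?_, ?_⟩
    · simp [hi, gvec]
    · simp [hi, gvec]
    · exact .inr <| .inr <| .inr <| .inr <| .inr <| .inl
        ⟨b, c, .inr (.inr ⟨rfl, by rw [h3]; rfl⟩)⟩

/-- All eight vertices `q_{l,c}` of a block lie within two tree edges of one common vertex, namely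
the `v_⊕` or `v_⊖` to which the chosen variable is attached. -/
lemma exists_hub (φ : SAT3) (a : ℕ → Bool) (ha : φ.satisfiedBy a) (h : ℕ)
    (b : BlockAddr) (hb : validBlock φ h b) (c : Clause3) (hc : c ∈ φ.clauses) :
    ∃ w : RedVert φ h, ∀ l : Fin 8, ∃ u : RedVert φ h,
      (spannerTree φ h a).Adj u w ∧ (spannerTree φ h a).Adj u ⟨RVert.q b c l, ⟨hb, hc⟩⟩ := by
  obtain ⟨x, hx, hg0, hg1, hrel⟩ := exists_chosen (ha c hc) b
  have hxφ : x ∈ φ.vars := by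
    refine Finset.mem_biUnion.2 ⟨c, hc, ?_⟩
    simpa [Clause3.hasVar] using hx
  refine ⟨⟨anchor b (a x), validVert_anchor hb _⟩, fun l => ?_⟩
  rcases Mmat_cover (chosenIdx a c) l with hM | hM
  · refine ⟨⟨RVert.var b x, hb, hxφ⟩, ⟨var_ne_anchor _ _ _ _, .inl ?_⟩,
      ⟨RVert.noConfusion, .inl ?_⟩⟩
    · exact .inr <| .inr <| .inr <| .inr <| .inl ⟨b, x, rfl, rfl⟩
    · exact .inr <| .inr <| .inr <| .inr <| .inr <| .inr
        ⟨b, c, _, l, .inl rfl, hM, hg0.symm, rfl⟩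
  · refine ⟨⟨RVert.varC b c x, hb, hc, hx⟩, ⟨varC_ne_anchor _ _ _ _ _, .inl hrel⟩,
      ⟨RVert.noConfusion, .inl ?_⟩⟩
    exact .inr <| .inr <| .inr <| .inr <| .inr <| .inr
      ⟨b, c, _, l, .inr rfl, hM, hg1.symm, rfl⟩

/-- Let `φ` be a satisfiable 3-SAT instance, `a` a truth assignment
satisfying `φ`, `h > 1`, `G = reduction(φ, h)` and `T = tree_7-spanner(G, φ, a)`.  Then for
every building block `G^{i,j}` of `G` and every clause `c` of `φ`, the `T`-distance between
any two of the vertices `q_{1,c}^{i,j}, …, q_{8,c}^{i,j}` is at most 4. -/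
theorem spannerTree_q_dist_le_four
    (φ : SAT3) (a : ℕ → Bool) (ha : φ.satisfiedBy a) (h : ℕ) (hh : 1 < h)
    (b : BlockAddr) (hb : validBlock φ h b) (c : Clause3) (hc : c ∈ φ.clauses)
    (r r' : Fin 8) :
    (spannerTree φ h a).dist ⟨RVert.q b c r, ⟨hb, hc⟩⟩ ⟨RVert.q b c r', ⟨hb, hc⟩⟩ ≤ 4 := by
  obtain ⟨w, hw⟩ := exists_hub φ a ha h b hb c hc
  obtain ⟨u, huw, huq⟩ := hw r
  obtain ⟨u', huw', huq'⟩ := hw r'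
  exact SimpleGraph.dist_le
    (.cons huq.symm (.cons huw (.cons huw'.symm (.cons huq' .nil))))
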